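/- arXiv:1404.4852 — 2 statements merged into one kernel-verified Lean document; each statement's English description precedes it below -/
import Mathlib

section
/- Let r ≥ 1 and let Q be a polynomial of total degree at most 2 in n ≥ 3 variables (x_1, …, x_{n-1}, z) over Z_{2^r}. Then for every natural number v ≤ r and all elements k, g, l ∈ Z_{2^r}, the sum Σ_{j=0}^{2^v - 1} #k_{Q, z = l + g 2^{r-v} j} is divisible by 2^{⌈(r(n-1) + min(2v, r))/2⌉ - 1}. -/
open Finset

def qf {ι : Type} [Fintype ι] {R : Type} [CommRing R] (c : R) (b : ι → R) (A : ι → ι → R) (x : ι → R) : R :=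
  c + ∑ i, b i * x i + ∑ i, ∑ j, A i j * x i * x j

def dq {ι : Type} [Fintype ι] {R : Type} [CommRing R] (b : ι → R) (A : ι → ι → R) (x : ι → R) (i : ι) : R :=
  b i + ∑ j, (A i j + A j i) * x j

lemma qf_shift {ι : Type} [Fintype ι] {R : Type} [CommRing R] (c : R) (b : ι → R) (A : ι → ι → R) (a y : ι → R) (t : R) :
    qf c b A (fun i => a i + t * y i) = qf c b A a + t * ∑ i, dq b A a i * y i
      + t ^ 2 * ∑ i, ∑ j, A i j * y i * y j := by
  unfold qf dq
  have h1 : ∑ i, ∑ j, A i j * (a i + t * y i) * (a j + t * y j) =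
      ∑ i, ∑ j, A i j * a i * a j + t * ∑ i, ∑ j, A i j * a j * y i
      + t * ∑ i, ∑ j, A i j * a i * y j + t ^ 2 * ∑ i, ∑ j, A i j * y i * y j := by
    simp only [mul_sum, ← sum_add_distrib]
    refine sum_congr rfl fun i _ => sum_congr rfl fun j _ => by ring
  have h2 : ∑ i, (b i + ∑ j, (A i j + A j i) * a j) * y i =
      ∑ i, b i * y i + ∑ i, ∑ j, A i j * a j * y i + ∑ i, ∑ j, A j i * a j * y i := by
    simp only [← sum_add_distrib, add_mul, sum_mul]
    simp only [sum_add_distrib]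
    ring
  have h3 : ∑ i, ∑ j, A j i * a j * y i = ∑ i, ∑ j, A i j * a i * y j := by
    rw [sum_comm]
  have h4 : ∑ i, b i * (a i + t * y i) = ∑ i, b i * a i + t * ∑ i, b i * y i := by
    simp only [mul_sum, ← sum_add_distrib]
    refine sum_congr rfl fun i _ => by ring
  rw [h1, h2, h3, h4]; ring

def cst {ι : Type} (x : ι → ℕ) : ι → ℤ := fun i => (x i : ℤ)

def bx {ι : Type} [Fintype ι] [DecidableEq ι] (N : ι → ℕ) : Finset (ι → ℕ) :=
  Fintype.piFinset fun i => range (2 ^ N i)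

lemma card_bx {ι : Type} [Fintype ι] [DecidableEq ι] (N : ι → ℕ) :
    (bx N).card = 2 ^ ∑ i, N i := by
  simp [bx, Fintype.card_piFinset, prod_pow_eq_pow_sum]

lemma bx_split {ι : Type} [Fintype ι] [DecidableEq ι] (N : ι → ℕ) (hN : ∀ i, 1 ≤ N i)
    (f : (ι → ℕ) → ℕ) :
    ∑ x ∈ bx N, f x = ∑ a ∈ bx (fun _ : ι => 1), ∑ y ∈ bx (fun i => N i - 1),
      f (fun i => a i + 2 * y i) := by
  rw [← sum_product']
  have hp : ∀ i, 2 ^ N i = 2 * 2 ^ (N i - 1) := fun i => by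
    rw [← pow_succ']; congr 1; have := hN i; omega
  refine sum_bij' (fun x _ => (fun i => x i % 2, fun i => x i / 2))
    (fun p _ => fun i => p.1 i + 2 * p.2 i) ?_ ?_ ?_ ?_ ?_
  · intro x hx
    simp only [bx, Fintype.mem_piFinset, mem_range, mem_product] at hx ⊢
    refine ⟨fun i => by omega, fun i => ?_⟩
    have := hx i; rw [hp i] at this; omega
  · intro p hx
    simp only [bx, Fintype.mem_piFinset, mem_range, mem_product] at hx ⊢
    intro i
    have h1 := hx.1 i; have h2 := hx.2 i; rw [hp i]; omega
  · intro x _; funext i; dsimp only; omega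
  · intro p hx
    simp only [bx, Fintype.mem_piFinset, mem_range, mem_product] at hx
    ext i
    · have h1 := hx.1 i; dsimp only; omega
    · have h1 := hx.1 i; dsimp only; omega
  · intro x _; congr 1; funext i; dsimp only; omega

lemma bx_update {ι : Type} [Fintype ι] [DecidableEq ι] (N : ι → ℕ) (i : ι)
    (f : (ι → ℕ) → ℕ) :
    ∑ y ∈ bx N, ∑ u ∈ range (2 ^ N i), f (Function.update y i u) = (∑ y ∈ bx N, f y) * 2 ^ N i := by
  have : (∑ y ∈ bx N, f y) * 2 ^ N i = ∑ y ∈ bx N, ∑ u ∈ range (2 ^ N i), f y := by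
    rw [sum_mul]; refine sum_congr rfl fun y _ => by simp [mul_comm]
  rw [this, ← sum_product', ← sum_product']
  refine sum_bij' (fun p _ => (Function.update p.1 i p.2, p.1 i))
    (fun p _ => (Function.update p.1 i p.2, p.1 i)) ?_ ?_ ?_ ?_ ?_
  · intro p hp
    simp only [bx, Fintype.mem_piFinset, mem_range, mem_product] at hp ⊢
    refine ⟨fun j => ?_, hp.1 i⟩
    by_cases h : j = i
    · subst h; simpa using hp.2
    · simpa [h] using hp.1 j
  · intro p hp
    simp only [bx, Fintype.mem_piFinset, mem_range, mem_product] at hp ⊢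
    refine ⟨fun j => ?_, hp.1 i⟩
    by_cases h : j = i
    · subst h; simpa using hp.2
    · simpa [h] using hp.1 j
  · intro p _; simp
  · intro p _; simp
  · intro p _; simp

lemma hensel1 (t : ℕ) : ∀ (N : ℕ) (α β γ : ℤ), t ≤ N → ¬ 2 ∣ β →
    ∑ u ∈ range (2 ^ N), (if (2 : ℤ) ^ t ∣ α + β * u + 2 * γ * u ^ 2 then 1 else 0)
      = 2 ^ (N - t) := by
  induction t with
  | zero => intro N α β γ _ _; simp
  | succ t ih =>
    intro N α β γ hN hβ
    obtain ⟨N, rfl⟩ : ∃ M, N = M + 1 := ⟨N - 1, by omega⟩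
    have hs : ∀ f : ℕ → ℕ, ∑ u ∈ range (2 ^ (N + 1)), f u =
        ∑ u ∈ range (2 ^ N), f (2 * u) + ∑ u ∈ range (2 ^ N), f (2 * u + 1) := by
      intro f
      rw [pow_succ]
      generalize 2 ^ N = K
      induction K with
      | zero => simp
      | succ K ih2 =>
        rw [show (K + 1) * 2 = K * 2 + 1 + 1 by ring, sum_range_succ, sum_range_succ, ih2,
          sum_range_succ, sum_range_succ, mul_comm K 2]; ring
    rw [hs]
    have key : ∀ x y : ℤ, x = 2 * y → ((2:ℤ) ^ (t+1) ∣ x ↔ (2:ℤ)^t ∣ y) := by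
      rintro x y rfl
      rw [pow_succ', mul_dvd_mul_iff_left (by norm_num)]
    have key2 : ∀ x : ℤ, ¬ 2 ∣ x → ¬ ((2:ℤ) ^ (t+1) ∣ x) := by
      intro x hx h
      exact hx (dvd_trans (dvd_pow_self 2 (by omega)) h)
    rcases Int.even_or_odd' α with ⟨k, hk | hk⟩
    · have e1 : ∀ u : ℕ, ((2:ℤ) ^ (t+1) ∣ α + β * (2 * u : ℕ) + 2 * γ * (2 * u : ℕ) ^ 2 ↔
          (2:ℤ)^t ∣ k + β * u + 2 * (2 * γ) * u ^ 2) := fun u => key _ _ (by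
            rw [hk]; push_cast; ring)
      have e2 : ∀ u : ℕ, ¬ ((2:ℤ) ^ (t+1) ∣ α + β * (2 * u + 1 : ℕ) + 2 * γ * (2 * u + 1 : ℕ) ^ 2) := by
        intro u
        apply key2
        intro h
        apply hβ
        have : β = (α + β * (2 * u + 1 : ℕ) + 2 * γ * (2 * u + 1 : ℕ) ^ 2) - 2 * (k + β * u + γ * (2 * u + 1 : ℕ) ^ 2) := by
          rw [hk]; push_cast; ring
        rw [this]
        exact dvd_sub h (dvd_mul_right _ _)
      simp only [e1, e2, if_false, sum_const_zero, add_zero]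
      rw [ih N k β (2 * γ) (by omega) hβ]; congr 1; omega
    · obtain ⟨w, hw⟩ : ∃ w, β = 2 * w + 1 := ⟨β / 2, by omega⟩
      have e1 : ∀ u : ℕ, ¬ ((2:ℤ) ^ (t+1) ∣ α + β * (2 * u : ℕ) + 2 * γ * (2 * u : ℕ) ^ 2) := by
        intro u
        apply key2
        rw [hk]
        have : 2 * k + 1 + β * (2 * u : ℕ) + 2 * γ * (2 * u : ℕ) ^ 2 = 2 * (k + β * u + γ * (2 * u : ℕ) ^ 2) + 1 := by
          push_cast; ring
        rw [this]; omega
      have e2 : ∀ u : ℕ, ((2:ℤ) ^ (t+1) ∣ α + β * (2 * u + 1 : ℕ) + 2 * γ * (2 * u + 1 : ℕ) ^ 2 ↔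
          (2:ℤ)^t ∣ (k + w + 1 + γ) + (β + 4 * γ) * u + 2 * (2 * γ) * u ^ 2) := fun u => key _ _ (by
            rw [hk]; push_cast; rw [hw]; ring)
      simp only [e1, e2, if_false, sum_const_zero, zero_add]
      rw [ih N _ (β + 4 * γ) (2 * γ) (by omega) (by omega)]; congr 1; omega

lemma hensel {ι : Type} [Fintype ι] [DecidableEq ι] (N : ι → ℕ) (t : ℕ) (c : ℤ) (b : ι → ℤ)
    (A : ι → ι → ℤ) (i : ι) (hi : ¬ 2 ∣ b i) (ht : t ≤ N i) :
    ∑ y ∈ bx N, (if (2 : ℤ) ^ t ∣ qf c b (fun i j => 2 * A i j) (cst y) then 1 else 0)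
      = 2 ^ (∑ i, N i - t) := by
  have h := bx_update N i (fun y =>
    if (2 : ℤ) ^ t ∣ qf c b (fun i j => 2 * A i j) (cst y) then 1 else 0)
  have h2 : ∀ y : ι → ℕ, ∑ u ∈ range (2 ^ N i), 
      (if (2 : ℤ) ^ t ∣ qf c b (fun i j => 2 * A i j) (cst (Function.update y i u)) then 1 else 0)
      = 2 ^ (N i - t) := by
    intro y
    set y0 : ι → ℤ := cst (Function.update y i 0) with hy0
    rw [← hensel1 t (N i) (qf c b (fun i j => 2 * A i j) y0) (dq b (fun i j => 2 * A i j) y0 i)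
      (A i i) ht ?_]
    · refine sum_congr rfl fun u _ => ?_
      have : cst (Function.update y i u) = fun j => y0 j + (u : ℤ) * (Pi.single i 1 : ι → ℤ) j := by
        funext j
        by_cases h : j = i
        · subst h; simp [hy0, cst]
        · simp [hy0, cst, h]
      rw [this, qf_shift]
      have e : ∑ i_1, ∑ j, 2 * A i_1 j * (Pi.single i 1 : ι → ℤ) i_1 * (Pi.single i 1 : ι → ℤ) j = 2 * A i i := by
        rw [sum_eq_single i, sum_eq_single i] <;> simp +contextual [Pi.single_apply]
      have e' : ∑ j, dq b (fun i j => 2 * A i j) y0 j * (Pi.single i 1 : ι → ℤ) j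
        = dq b (fun i j => 2 * A i j) y0 i := by
        rw [sum_eq_single i] <;> simp +contextual [Pi.single_apply]
      rw [e, e']
      ring_nf
    · unfold dq
      simp only [← mul_add, mul_assoc, ← mul_sum]
      omega
  simp only [h2, sum_const, card_bx, smul_eq_mul] at h
  have hle : N i ≤ ∑ i, N i := single_le_sum (f := N) (fun _ _ => Nat.zero_le _) (mem_univ i)
  have h3 : 2 ^ (∑ i, N i) * 2 ^ (N i - t) = 2 ^ (∑ i, N i - t) * 2 ^ N i := by
    rw [← pow_add, ← pow_add]; congr 1; omega
  rw [h3] at h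
  exact (Nat.eq_of_mul_eq_mul_right (by positivity) h).symm

lemma qf_cast {ι : Type} [Fintype ι] {R : Type} [CommRing R] (c : ℤ) (b : ι → ℤ) (A : ι → ι → ℤ)
    (x : ι → ℤ) : ((qf c b A x : ℤ) : R) =
    qf (c : R) (fun i => (b i : R)) (fun i j => (A i j : R)) (fun i => (x i : R)) := by
  simp [qf]

def chi2 : AddChar (ZMod 2) ℤ where
  toFun a := if a = 0 then 1 else -1
  map_zero_eq_one' := by simp
  map_add_eq_mul' := by decide

lemma chi2_sum {ι : Type} (t : Finset ι) (f : ι → ZMod 2) :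
    chi2 (∑ i ∈ t, f i) = ∏ i ∈ t, chi2 (f i) := by
  classical
  induction t using Finset.induction_on with
  | empty => simp
  | insert a t ha ih => rw [sum_insert ha, prod_insert ha, AddChar.map_add_eq_mul, ih]

lemma sq_dvd (f : ℕ) : ∀ E : ℤ, (2 : ℤ) ^ (2 * f + 1) ∣ E * E → (2 : ℤ) ^ (f + 1) ∣ E := by
  induction f with
  | zero => intro E h; simpa using or_self_iff.1 (Int.prime_two.dvd_mul.1 (by simpa using h))
  | succ f ih =>
    intro E h
    have h2 : (2 : ℤ) ∣ E := by
      have : (2 : ℤ) ∣ E * E := dvd_trans (dvd_pow_self 2 (by omega)) h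
      exact or_self_iff.1 (Int.prime_two.dvd_mul.1 this)
    obtain ⟨k, rfl⟩ := h2
    rw [pow_succ', mul_dvd_mul_iff_left (by norm_num)]
    apply ih
    have e1 : (2 : ℤ) ^ (2 * (f + 1) + 1) = 4 * 2 ^ (2 * f + 1) := by ring
    have e2 : 2 * k * (2 * k) = 4 * (k * k) := by ring
    rw [e1, e2, mul_dvd_mul_iff_left (by norm_num)] at h
    exact h

lemma ax_E {ι : Type} [Fintype ι] [DecidableEq ι] (c : ZMod 2) (b : ι → ZMod 2)
    (A : ι → ι → ZMod 2) :
    (2 : ℤ) ^ Fintype.card ι ∣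
      (∑ x : ι → ZMod 2, chi2 (qf c b A x)) * (∑ x : ι → ZMod 2, chi2 (qf c b A x)) := by
  have h0 : (∑ x : ι → ZMod 2, chi2 (qf c b A x)) * (∑ x : ι → ZMod 2, chi2 (qf c b A x))
      = ∑ h : ι → ZMod 2, ∑ x : ι → ZMod 2, chi2 (qf c b A (fun i => h i + 1 * x i) + qf c b A x) := by
    rw [sum_mul_sum, sum_comm]
    conv_rhs => rw [sum_comm]
    refine sum_congr rfl fun x _ => ?_
    rw [← Equiv.sum_comp (Equiv.addRight x)]
    refine sum_congr rfl fun y _ => ?_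
    rw [AddChar.map_add_eq_mul]
    congr 3
    funext i; simp
  rw [h0]
  refine dvd_sum fun h _ => ?_
  have h1 : ∀ x : ι → ZMod 2, chi2 (qf c b A (fun i => h i + 1 * x i) + qf c b A x) =
      chi2 (qf c b A h + c) * ∏ i, chi2 ((dq b A h i + b i) * x i) := by
    intro x
    rw [← chi2_sum, ← AddChar.map_add_eq_mul, qf_shift]
    congr 1
    have : qf c b A x = c + ∑ i, b i * x i + ∑ i, ∑ j, A i j * x i * x j := rfl
    rw [this]
    simp only [add_mul, sum_add_distrib]
    have t : (2 : ZMod 2) = 0 := by decide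
    linear_combination (∑ i, ∑ j, A i j * x i * x j) * t
  simp only [h1]
  rw [← mul_sum]
  apply Dvd.dvd.mul_left
  have := Finset.prod_univ_sum (fun _ : ι => (univ : Finset (ZMod 2)))
    (fun i t => chi2 ((dq b A h i + b i) * t))
  rw [Fintype.piFinset_univ] at this
  rw [← this]
  have h2 : (2 : ℤ) ^ Fintype.card ι = ∏ _i : ι, 2 := by simp
  rw [h2]
  refine prod_dvd_prod_of_dvd _ _ fun i _ => ?_
  generalize dq b A h i + b i = d
  revert d
  decide

lemma ax2 {ι : Type} [Fintype ι] [DecidableEq ι] (c : ℤ) (b : ι → ℤ)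
    (A : ι → ι → ℤ) (f : ℕ) (hf : 2 * f + 1 ≤ Fintype.card ι) :
    2 ^ f ∣ ∑ a ∈ bx (fun _ : ι => 1), (if (2 : ℤ) ∣ qf c b A (cst a) then 1 else 0) := by
  have h0 : ∑ a ∈ bx (fun _ : ι => 1), (if (2 : ℤ) ∣ qf c b A (cst a) then 1 else 0) =
      ∑ x : ι → ZMod 2, if qf (c : ZMod 2) (fun i => (b i : ZMod 2)) (fun i j => (A i j : ZMod 2)) x = 0
        then 1 else 0 := by
    refine sum_bij' (fun a _ => fun i => (a i : ZMod 2)) (fun x _ => fun i => (x i).val) ?_ ?_ ?_ ?_ ?_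
    · intros; simp
    · intro x _; simp only [bx, Fintype.mem_piFinset, mem_range]
      intro i; simpa using ZMod.val_lt (x i)
    · intro a ha
      simp only [bx, Fintype.mem_piFinset, mem_range] at ha
      funext i
      simp only [ZMod.val_natCast]
      exact Nat.mod_eq_of_lt (by simpa using ha i)
    · intro x _; funext i; simp
    · intro a _
      have := qf_cast (R := ZMod 2) c b A (cst a)
      simp only [cst, Int.cast_natCast] at this
      rw [← this]
      have := ZMod.intCast_zmod_eq_zero_iff_dvd (qf c b A (cst a)) 2
      simp only [Nat.cast_ofNat] at this
      simp only [← this]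
  rw [h0]
  set q : (ι → ZMod 2) → ZMod 2 := qf (c : ZMod 2) (fun i => (b i : ZMod 2)) (fun i j => (A i j : ZMod 2)) with hq
  have h1 : (2 : ℤ) * ((∑ x : ι → ZMod 2, if q x = 0 then 1 else 0 : ℕ) : ℤ) =
      2 ^ Fintype.card ι + ∑ x : ι → ZMod 2, chi2 (q x) := by
    have : (2 : ℤ) ^ Fintype.card ι = ∑ x : ι → ZMod 2, 1 := by simp
    rw [this, ← sum_add_distrib, Nat.cast_sum, mul_sum]
    refine sum_congr rfl fun x _ => ?_
    generalize q x = t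
    revert t; decide
  have h2 : (2 : ℤ) ^ (f + 1) ∣ ∑ x : ι → ZMod 2, chi2 (q x) :=
    sq_dvd f _ (dvd_trans (pow_dvd_pow _ hf) (ax_E _ _ _))
  have h3 : (2 : ℤ) ^ (f + 1) ∣ 2 ^ Fintype.card ι := pow_dvd_pow _ (by omega)
  have h4 := dvd_add h3 h2
  rw [← h1, pow_succ', mul_dvd_mul_iff_left (by norm_num)] at h4
  exact_mod_cast h4

lemma dvd_four (s : ℕ) (x y : ℤ) (h : x = 4 * y) : (2 : ℤ) ^ (s + 2) ∣ x ↔ (2 : ℤ) ^ s ∣ y := by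
  rw [h, show (2 : ℤ) ^ (s + 2) = 4 * 2 ^ s by ring, mul_dvd_mul_iff_left (by norm_num)]

lemma dvd_two (s : ℕ) (x y : ℤ) (h : x = 2 * y) : (2 : ℤ) ^ (s + 1) ∣ x ↔ (2 : ℤ) ^ s ∣ y := by
  rw [h, show (2 : ℤ) ^ (s + 1) = 2 * 2 ^ s by ring, mul_dvd_mul_iff_left (by norm_num)]

lemma sum_pred {ι : Type} [Fintype ι] (N : ι → ℕ) (hN : ∀ i, 1 ≤ N i) :
    ∑ i, (N i - 1) + Fintype.card ι = ∑ i, N i := by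
  rw [← card_univ, card_eq_sum_ones, ← sum_add_distrib]
  exact sum_congr rfl fun i _ => by have := hN i; omega

lemma cst_add {ι : Type} (a y : ι → ℕ) :
    cst (fun i => a i + 2 * y i) = fun i => cst a i + 2 * cst y i := by
  funext i; simp [cst]

lemma arith1 (s m : ℕ) (hm : 2 ≤ m) : 2 * m + 2 * (s + 2) ≤ (s + 2) * m + 4 := by
  nlinarith [Nat.mul_le_mul_left s hm]

lemma thmT (s : ℕ) : ∀ {ι : Type} [Fintype ι] [DecidableEq ι], 2 ≤ Fintype.card ι →
    ∀ (N : ι → ℕ), (∀ i, s ≤ N i) → ∀ (c : ℤ) (b : ι → ℤ) (A : ι → ι → ℤ) (e : ℕ),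
    2 * e + 1 + s * Fintype.card ι ≤ 2 * ∑ i, N i →
    2 ^ e ∣ ∑ x ∈ bx N, (if (2 : ℤ) ^ s ∣ qf c b A (cst x) then 1 else 0) := by
  induction s using Nat.twoStepInduction with
  | zero =>
    intro ι _ _ hm N hN c b A e he
    simp only [pow_zero, isUnit_one, IsUnit.dvd, if_true, sum_const, card_bx, smul_eq_mul, mul_one]
    exact pow_dvd_pow _ (by omega)
  | one =>
    intro ι _ _ hm N hN c b A e he
    rw [bx_split N hN]
    have hS := sum_pred N hN
    have : ∀ a y : ι → ℕ, ((2 : ℤ) ^ 1 ∣ qf c b A (cst (fun i => a i + 2 * y i)) ↔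
        (2 : ℤ) ∣ qf c b A (cst a)) := by
      intro a y
      rw [cst_add, qf_shift, pow_one]
      omega
    simp only [this, sum_const, card_bx, smul_eq_mul, ← mul_sum]
    rcases le_total e (∑ i, (N i - 1)) with h | h
    · exact Dvd.dvd.mul_right (pow_dvd_pow _ h) _
    · obtain ⟨f, rfl⟩ := Nat.exists_eq_add_of_le h
      rw [pow_add]
      exact mul_dvd_mul_left _ (ax2 c b A f (by omega))
  | more s ih _ =>
    intro ι _ _ hm N hN c b A e he
    have hN1 : ∀ i, 1 ≤ N i := fun i => by have := hN i; omega
    have hS := sum_pred N hN1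
    have har := arith1 s _ hm
    rw [bx_split N hN1]
    refine dvd_sum fun a _ => ?_
    simp only [cst_add, qf_shift]
    by_cases hd : ∀ i, 2 ∣ dq b A (cst a) i
    · choose d hd using hd
      by_cases h4 : (4 : ℤ) ∣ qf c b A (cst a)
      · obtain ⟨k, hk⟩ := h4
        have : ∀ y : ι → ℕ, ((2 : ℤ) ^ (s + 2) ∣ qf c b A (cst a) + 2 * ∑ i, dq b A (cst a) i * cst y i
            + 2 ^ 2 * ∑ i, ∑ j, A i j * cst y i * cst y j ↔ (2 : ℤ) ^ s ∣ qf k d A (cst y)) := by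
          intro y
          apply dvd_four
          rw [hk]; simp only [hd, mul_assoc, ← mul_sum, qf]
          ring
        simp only [this]
        refine ih hm (fun i => N i - 1) (fun i => by have := hN i; omega) k d A e ?_
        nlinarith
      · rw [sum_eq_zero]
        · simp
        intro y _
        rw [if_neg]
        intro h
        apply h4
        have h5 : (4 : ℤ) ∣ (2 : ℤ) ^ (s + 2) := ⟨2 ^ s, by ring⟩
        have h6 := dvd_trans h5 h
        simp only [hd, mul_assoc, ← mul_sum] at h6
        omega
    · push Not at hd
      obtain ⟨i, hi⟩ := hd
      by_cases h2 : (2 : ℤ) ∣ qf c b A (cst a)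
      · obtain ⟨k, hk⟩ := h2
        have : ∀ y : ι → ℕ, ((2 : ℤ) ^ (s + 2) ∣ qf c b A (cst a) + 2 * ∑ i, dq b A (cst a) i * cst y i
            + 2 ^ 2 * ∑ i, ∑ j, A i j * cst y i * cst y j ↔ (2 : ℤ) ^ (s + 1) ∣
              qf k (dq b A (cst a)) (fun i j => 2 * A i j) (cst y)) := by
          intro y
          apply dvd_two
          rw [hk]; simp only [mul_assoc, ← mul_sum, qf]
          ring
        simp only [this]
        rw [hensel _ _ _ _ _ i hi (by have := hN i; omega)]
        apply pow_dvd_pow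
        omega
      · rw [sum_eq_zero]
        · simp
        intro y _
        rw [if_neg]
        intro h
        apply h2
        have h6 := dvd_trans (dvd_pow_self (2:ℤ) (by omega : s + 2 ≠ 0)) h
        omega

lemma bx_option {κ : Type} [Fintype κ] [DecidableEq κ] (N : κ → ℕ) (M : ℕ)
    (f : (Option κ → ℕ) → ℕ) :
    ∑ x ∈ bx (fun o : Option κ => o.elim M N), f x =
    ∑ z ∈ range (2 ^ M), ∑ x ∈ bx N, f (fun o => o.elim z x) := by
  rw [← sum_product']
  refine sum_bij' (fun x _ => (x none, fun i => x (some i))) (fun p _ => fun o => o.elim p.1 p.2)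
    ?_ ?_ ?_ ?_ ?_
  · intro x hx
    simp only [bx, Fintype.mem_piFinset, mem_range, mem_product] at hx ⊢
    exact ⟨hx none, fun i => hx (some i)⟩
  · intro p hp
    simp only [bx, Fintype.mem_piFinset, mem_range, mem_product] at hp ⊢
    intro o
    cases o with
    | none => exact hp.1
    | some i => exact hp.2 i
  · intro x _; funext o; cases o <;> rfl
  · intro p _; rfl
  · intro x _; congr 1; funext o; cases o <;> rfl

def qz {κ : Type} [Fintype κ] (c : ℤ) (b : κ → ℤ) (A : κ → κ → ℤ) (l : ℤ) (w : κ → ℤ) (q : ℤ)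
    (x : κ → ℤ) (z : ℤ) : ℤ :=
  qf c b A x + z * (l + ∑ i, w i * x i) + q * z ^ 2

lemma qz_option {κ : Type} [Fintype κ] (c : ℤ) (b : κ → ℤ) (A : κ → κ → ℤ) (l : ℤ) (w : κ → ℤ)
    (q : ℤ) (x : κ → ℕ) (z : ℕ) :
    qz c b A l w q (cst x) z = qf c (fun o : Option κ => o.elim l b)
      (fun o o' => o.elim (o'.elim q (fun _ => 0)) (fun i => o'.elim (w i) (fun j => A i j)))
      (cst (fun o : Option κ => o.elim z x)) := by
  simp only [qz, qf, cst, Fintype.sum_option, Option.elim, sum_add_distrib]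
  have : ∑ i, w i * (x i : ℤ) * (z : ℤ) = z * ∑ i, w i * (x i : ℤ) := by
    rw [mul_sum]; exact sum_congr rfl fun i _ => by ring
  rw [this]
  simp only [zero_mul, sum_const_zero]
  ring

lemma S_top {κ : Type} [Fintype κ] [DecidableEq κ] (s : ℕ) (hm : 2 ≤ Fintype.card κ)
    (N : κ → ℕ) (M : ℕ) (hN : ∀ i, s ≤ N i) (hM : s ≤ M)
    (c : ℤ) (b : κ → ℤ) (A : κ → κ → ℤ) (l : ℤ) (w : κ → ℤ) (q : ℤ) (e : ℕ)
    (he : 2 * e + 1 + s * Fintype.card κ + s ≤ 2 * ∑ i, N i + 2 * M) :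
    2 ^ e ∣ ∑ z ∈ range (2 ^ M), ∑ x ∈ bx N,
      (if (2 : ℤ) ^ s ∣ qz c b A l w q (cst x) z then 1 else 0) := by
  simp only [qz_option]
  have := bx_option N M (fun x => if (2 : ℤ) ^ s ∣ qf c (fun o : Option κ => o.elim l b)
      (fun o o' => o.elim (o'.elim q (fun _ => 0)) (fun i => o'.elim (w i) (fun j => A i j)))
      (cst x) then 1 else 0)
  rw [← this]
  apply thmT s
  · rw [Fintype.card_option]; omega
  · intro o; cases o with
    | none => exact hM
    | some i => exact hN i
  · rw [Fintype.card_option, Fintype.sum_option]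
    simp only [Option.elim]
    rw [mul_add, mul_one]; omega

lemma S_bot {κ : Type} [Fintype κ] [DecidableEq κ] (s : ℕ) (hm : 2 ≤ Fintype.card κ)
    (N : κ → ℕ) (M : ℕ) (hN : ∀ i, s ≤ N i)
    (c : ℤ) (b : κ → ℤ) (A : κ → κ → ℤ) (l : ℤ) (w : κ → ℤ) (q : ℤ) (e : ℕ)
    (he : 2 * e + 1 + s * Fintype.card κ ≤ 2 * ∑ i, N i + 2 * M) :
    2 ^ e ∣ ∑ z ∈ range (2 ^ M), ∑ x ∈ bx N,
      (if (2 : ℤ) ^ s ∣ qz c b A l w q (cst x) (2 ^ s * z) then 1 else 0) := by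
  have : ∀ (x : κ → ℕ) (z : ℕ), ((2 : ℤ) ^ s ∣ qz c b A l w q (cst x) (2 ^ s * z) ↔
      (2 : ℤ) ^ s ∣ qf c b A (cst x)) := by
    intro x z
    unfold qz
    rw [add_assoc]
    apply dvd_add_left
    refine ⟨z * (l + ∑ i, w i * cst x i) + q * z * (2 ^ s * z), by ring⟩
  simp only [this, sum_const, card_range, smul_eq_mul]
  rcases le_total e M with h | h
  · exact Dvd.dvd.mul_right (pow_dvd_pow _ h) _
  · obtain ⟨f, rfl⟩ := Nat.exists_eq_add_of_le h
    rw [pow_add]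
    exact mul_dvd_mul_left _ (thmT s hm N hN c b A f (by omega))

lemma qz_shift {κ : Type} [Fintype κ] (c : ℤ) (b : κ → ℤ) (A : κ → κ → ℤ) (l : ℤ)
    (w : κ → ℤ) (q : ℤ) (a y : κ → ℤ) (z : ℤ) :
    qz c b A l w q (fun i => a i + 2 * y i) z = qf c b A a + 2 * ∑ i, dq b A a i * y i
      + 2 ^ 2 * ∑ i, ∑ j, A i j * y i * y j
      + z * ((l + ∑ i, w i * a i) + 2 * ∑ i, w i * y i) + q * z ^ 2 := by
  unfold qz
  rw [qf_shift]
  congr 3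
  rw [add_assoc]; congr 1
  rw [mul_sum, ← sum_add_distrib]
  exact sum_congr rfl fun i _ => by ring

lemma thmS (s : ℕ) : ∀ {κ : Type} [Fintype κ] [DecidableEq κ], 2 ≤ Fintype.card κ →
    ∀ (N : κ → ℕ) (M v : ℕ), (∀ i, s ≤ N i) → v ≤ s → v ≤ M →
    ∀ (c : ℤ) (b : κ → ℤ) (A : κ → κ → ℤ) (l : ℤ) (w : κ → ℤ) (q : ℤ) (e : ℕ),
    2 * e + 1 + s * Fintype.card κ + 2 * v ≤ 2 * ∑ i, N i + 2 * M + min (2 * v) s →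
    2 ^ e ∣ ∑ z ∈ range (2 ^ M), ∑ x ∈ bx N,
      (if (2 : ℤ) ^ s ∣ qz c b A l w q (cst x) (2 ^ (s - v) * z) then 1 else 0) := by
  induction s using Nat.twoStepInduction with
  | zero =>
    intro κ _ _ hm N M v hN hvs hvM c b A l w q e he
    obtain rfl : v = 0 := by omega
    exact S_bot 0 hm N M hN c b A l w q e (by omega)
  | one =>
    intro κ _ _ hm N M v hN hvs hvM c b A l w q e he
    obtain rfl | rfl : v = 0 ∨ v = 1 := by omega
    · exact S_bot 1 hm N M hN c b A l w q e (by omega)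
    · simpa using S_top 1 hm N M hN hvM c b A l w q e (by omega)
  | more s ih _ =>
    intro κ _ _ hm N M v hN hvs hvM c b A l w q e he
    by_cases hv0 : v = 0
    · subst hv0
      exact S_bot (s + 2) hm N M hN c b A l w q e (by omega)
    by_cases hvtop : v = s + 2
    · subst hvtop
      simpa using S_top (s + 2) hm N M hN hvM c b A l w q e (by omega)
    obtain ⟨u, rfl⟩ : ∃ u, v = u + 1 := ⟨v - 1, by omega⟩
    obtain ⟨p, rfl⟩ : ∃ p, s = u + p := ⟨s - u, by omega⟩
    have hN1 : ∀ i, 1 ≤ N i := fun i => by have := hN i; omega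
    have hS := sum_pred N hN1
    have har := arith1 (u + p) _ hm
    have hsp : u + p + 2 - (u + 1) = p + 1 := by omega
    rw [hsp]
    have hsp2 : u + p - u = p := by omega
    simp only [bx_split N hN1]
    rw [sum_comm]
    refine dvd_sum fun a _ => ?_
    simp only [cst_add, qz_shift]
    have hW : ∀ z : ℕ, (2 : ℤ) ^ (p + 1) * z = 2 * (2 ^ p * z) := fun z => by ring
    by_cases hd : ∀ i, 2 ∣ dq b A (cst a) i
    · by_cases hl : (2 : ℤ) ∣ l + ∑ i, w i * cst a i
      · choose d hd using hd
        obtain ⟨l', hl'⟩ := hl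
        simp only [hl', hd, hW]
        by_cases h4 : (4 : ℤ) ∣ qf c b A (cst a)
        · obtain ⟨k, hk⟩ := h4
          have : ∀ (y : κ → ℕ) (z : ℕ), ((2 : ℤ) ^ (u + p + 2) ∣
              qf c b A (cst a) + 2 * ∑ i, 2 * d i * cst y i
              + 2 ^ 2 * ∑ i, ∑ j, A i j * cst y i * cst y j
              + 2 * (2 ^ p * z) * (2 * l' + 2 * ∑ i, w i * cst y i) + q * (2 * (2 ^ p * z)) ^ 2 ↔
              (2 : ℤ) ^ (u + p) ∣ qz k d A l' w q (cst y) (2 ^ p * z)) := by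
            intro y z
            apply dvd_four
            rw [hk]; simp only [mul_assoc, ← mul_sum, qf, qz]
            ring
          simp only [this]
          have := ih hm (fun i => N i - 1) M u (fun i => by have := hN i; omega) (by omega)
            (by omega) k d A l' w q e (by
              have : (u + p + 2) * Fintype.card κ = (u + p) * Fintype.card κ + 2 * Fintype.card κ := by ring
              omega)
          rw [hsp2] at this
          exact this
        · rw [sum_eq_zero]
          · simp
          intro z _
          rw [sum_eq_zero]
          intro y _
          rw [if_neg]
          intro h
          apply h4
          have h5 : (4 : ℤ) ∣ (2 : ℤ) ^ (u + p + 2) := ⟨2 ^ (u + p), by ring⟩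
          have h6 := dvd_trans h5 h
          have h7 : qf c b A (cst a) + 2 * ∑ i, 2 * d i * cst y i
              + 2 ^ 2 * ∑ i, ∑ j, A i j * cst y i * cst y j
              + 2 * (2 ^ p * z) * (2 * l' + 2 * ∑ i, w i * cst y i) + q * (2 * (2 ^ p * z)) ^ 2 
              = qf c b A (cst a) + 4 * (∑ i, d i * cst y i + ∑ i, ∑ j, A i j * cst y i * cst y j
              + (2 ^ p * z) * (l' + ∑ i, w i * cst y i) + q * ((2 ^ p * z)) ^ 2) := by
            simp only [mul_assoc, ← mul_sum]
            ring
          rw [h7] at h6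
          omega
      · rw [sum_comm]
        have hz : ∀ y : κ → ℕ, ∑ z ∈ range (2 ^ M), (if (2 : ℤ) ^ (u + p + 2) ∣
            qf c b A (cst a) + 2 * ∑ i, dq b A (cst a) i * cst y i
            + 2 ^ 2 * ∑ i, ∑ j, A i j * cst y i * cst y j
            + 2 ^ (p + 1) * (z : ℤ) * ((l + ∑ i, w i * cst a i) + 2 * ∑ i, w i * cst y i)
            + q * (2 ^ (p + 1) * (z : ℤ)) ^ 2 then 1 else 0) = 2 ^ (M - (u + 1)) *
            (if (2 : ℤ) ^ (p + 1) ∣ qf c b A (cst a) + 2 * ∑ i, dq b A (cst a) i * cst y i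
            + 2 ^ 2 * ∑ i, ∑ j, A i j * cst y i * cst y j then 1 else 0) := by
          intro y
          generalize qf c b A (cst a) + 2 * ∑ i, dq b A (cst a) i * cst y i
            + 2 ^ 2 * ∑ i, ∑ j, A i j * cst y i * cst y j = X
          have hl2 : ¬ (2 : ℤ) ∣ (l + ∑ i, w i * cst a i) + 2 * ∑ i, w i * cst y i := by omega
          revert hl2
          generalize (l + ∑ i, w i * cst a i) + 2 * ∑ i, w i * cst y i = L
          intro hl2
          split_ifs with hX
          · obtain ⟨α, rfl⟩ := hX
            rw [mul_one, ← hensel1 (u + 1) M α L (2 ^ p * q) hvM hl2]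
            refine sum_congr rfl fun z _ => ?_
            have e1 : (2 : ℤ) ^ (u + p + 2) = 2 ^ (p + 1) * 2 ^ (u + 1) := by ring
            have e2 : 2 ^ (p + 1) * α + 2 ^ (p + 1) * (z : ℤ) * L + q * (2 ^ (p + 1) * (z : ℤ)) ^ 2
              = 2 ^ (p + 1) * (α + L * z + 2 * (2 ^ p * q) * z ^ 2) := by ring
            rw [e1, e2]
            simp only [mul_dvd_mul_iff_left (show (2 : ℤ) ^ (p + 1) ≠ 0 by positivity)]
          · rw [mul_zero]
            apply sum_eq_zero
            intro z _
            rw [if_neg]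
            intro h
            apply hX
            have h1 : (2 : ℤ) ^ (p + 1) ∣ 2 ^ (u + p + 2) := pow_dvd_pow _ (by omega)
            have h2 := dvd_trans h1 h
            rw [add_assoc] at h2
            refine (dvd_add_left ?_).1 h2
            exact ⟨z * L + q * z * (2 ^ (p + 1) * z), by ring⟩
        simp only [hz, ← mul_sum]
        have hsm : (u + p + 2) * Fintype.card κ = u * Fintype.card κ + p * Fintype.card κ
          + 2 * Fintype.card κ := by ring
        have hum : u * 2 ≤ u * Fintype.card κ := Nat.mul_le_mul_left u hm
        rcases le_total e (M - (u + 1)) with h | h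
        · exact Dvd.dvd.mul_right (pow_dvd_pow _ h) _
        obtain ⟨f, rfl⟩ := Nat.exists_eq_add_of_le h
        rw [pow_add]
        apply mul_dvd_mul_left
        choose d hd using hd
        simp only [hd]
        rcases p with _ | p
        · have : ∀ y : κ → ℕ, ((2 : ℤ) ^ (0 + 1) ∣ qf c b A (cst a) + 2 * ∑ i, 2 * d i * cst y i
            + 2 ^ 2 * ∑ i, ∑ j, A i j * cst y i * cst y j ↔ (2 : ℤ) ∣ qf c b A (cst a)) := by
            intro y; rw [zero_add, pow_one]; omega
          simp only [this, sum_const, card_bx, smul_eq_mul]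
          apply Dvd.dvd.mul_right
          apply pow_dvd_pow
          omega
        · by_cases h4 : (4 : ℤ) ∣ qf c b A (cst a)
          · obtain ⟨k, hk⟩ := h4
            have : ∀ y : κ → ℕ, ((2 : ℤ) ^ (p + 1 + 1) ∣ qf c b A (cst a) + 2 * ∑ i, 2 * d i * cst y i
                + 2 ^ 2 * ∑ i, ∑ j, A i j * cst y i * cst y j ↔ (2 : ℤ) ^ p ∣ qf k d A (cst y)) := by
              intro y
              apply dvd_four
              rw [hk]; simp only [mul_assoc, ← mul_sum, qf]
              ring
            simp only [this]
            refine thmT p hm (fun i => N i - 1) (fun i => by have := hN i; omega) k d A f ?_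
            have : (p + 1) * Fintype.card κ = p * Fintype.card κ + Fintype.card κ := by ring
            omega
          · rw [sum_eq_zero]
            · simp
            intro y _
            rw [if_neg]
            intro h
            apply h4
            have h5 : (4 : ℤ) ∣ (2 : ℤ) ^ (p + 1 + 1) := ⟨2 ^ p, by ring⟩
            have h6 := dvd_trans h5 h
            simp only [mul_assoc, ← mul_sum] at h6
            omega
    · push Not at hd
      obtain ⟨i, hi⟩ := hd
      by_cases h2 : (2 : ℤ) ∣ qf c b A (cst a)
      · obtain ⟨k, hk⟩ := h2
        set lam := l + ∑ i, w i * cst a i with hlam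
        have : ∀ (z : ℕ) (y : κ → ℕ), ((2 : ℤ) ^ (u + p + 2) ∣ qf c b A (cst a)
            + 2 * ∑ i, dq b A (cst a) i * cst y i
            + 2 ^ 2 * ∑ i, ∑ j, A i j * cst y i * cst y j
            + 2 ^ (p + 1) * (z : ℤ) * (lam + 2 * ∑ i, w i * cst y i)
            + q * (2 ^ (p + 1) * (z : ℤ)) ^ 2 ↔ (2 : ℤ) ^ (u + p + 1) ∣
              qf (k + 2 ^ p * z * lam + 2 * q * (2 ^ p * z) ^ 2)
                (fun i => dq b A (cst a) i + 2 * (2 ^ p * z * w i))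
                (fun i j => 2 * A i j) (cst y)) := by
          intro z y
          apply dvd_two
          rw [hk, hW]; simp only [mul_assoc, ← mul_sum, qf, add_mul, sum_add_distrib]
          ring
        simp only [this]
        have h3 : ∀ z : ℕ, ∑ y ∈ bx (fun i => N i - 1), (if (2 : ℤ) ^ (u + p + 1) ∣
              qf (k + 2 ^ p * z * lam + 2 * q * (2 ^ p * z) ^ 2)
                (fun i => dq b A (cst a) i + 2 * (2 ^ p * z * w i))
                (fun i j => 2 * A i j) (cst y) then 1 else 0) =
              2 ^ (∑ i, (N i - 1) - (u + p + 1)) := by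
          intro z
          exact hensel _ _ _ _ _ i (by omega) (by have := hN i; omega)
        simp only [h3, sum_const, card_range, smul_eq_mul]
        rw [← pow_add]
        apply pow_dvd_pow
        omega
      · rw [sum_eq_zero]
        · simp
        intro z _
        rw [sum_eq_zero]
        intro y _
        rw [if_neg]
        intro h
        apply h2
        have h6 := dvd_trans (dvd_pow_self (2:ℤ) (by omega : u + p + 2 ≠ 0)) h
        rw [hW] at h6
        have h7 : q * (2 * (2 ^ p * (z : ℤ))) ^ 2 = 2 * (2 * q * (2 ^ p * (z : ℤ)) ^ 2) := by ring
        rw [h7, mul_assoc 2 (2 ^ p * (z : ℤ))] at h6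
        omega

lemma prod_single_pow {σ : Type} [Fintype σ] [DecidableEq σ] {R : Type} [CommRing R] (i : σ)
    (x : σ → R) (d : σ →₀ ℕ) :
    ∏ j, x j ^ ((Finsupp.single i 1 + d : σ →₀ ℕ) j) = x i * ∏ j, x j ^ d j := by
  simp only [Finsupp.add_apply, pow_add, prod_mul_distrib]
  congr 1
  rw [prod_eq_single i]
  · simp
  · intro j _ hj
    rw [Finsupp.single_eq_of_ne hj, pow_zero]
  · simp

lemma exists_single {σ : Type} [DecidableEq σ] (d : σ →₀ ℕ) (hd : d ≠ 0) :
    ∃ i d', d = Finsupp.single i 1 + d' ∧ (d.sum fun _ e => e) = (d'.sum fun _ e => e) + 1 := by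
  obtain ⟨i, hi⟩ := Finsupp.ne_iff.1 hd
  have h : Finsupp.single i 1 ≤ d := by
    rw [Finsupp.single_le_iff]
    simp at hi; omega
  refine ⟨i, d - Finsupp.single i 1, (add_tsub_cancel_of_le h).symm, ?_⟩
  conv_lhs => rw [← add_tsub_cancel_of_le h]
  rw [Finsupp.sum_add_index' (by simp) (by simp)]
  simp [add_comm]

lemma quad_rep {σ : Type} [Fintype σ] [DecidableEq σ] {R : Type} [CommRing R]
    (Q : MvPolynomial σ R) (hQ : Q.totalDegree ≤ 2) :
    ∃ (c : R) (b : σ → R) (A : σ → σ → R), ∀ x, MvPolynomial.eval x Q = qf c b A x := by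
  simp only [MvPolynomial.eval_eq']
  have hs : ∀ d ∈ Q.support, (d.sum fun _ e => e) ≤ 2 :=
    fun d hd => (MvPolynomial.le_totalDegree hd).trans hQ
  revert hs
  generalize Q.support = S
  induction S using Finset.induction_on with
  | empty => intro _; exact ⟨0, 0, 0, fun x => by simp [qf]⟩
  | insert d S hd ih =>
    intro hs
    obtain ⟨c, b, A, h⟩ := ih fun d' h' => hs d' (mem_insert_of_mem h')
    have h1 := hs d (mem_insert_self _ _)
    suffices ∃ (c : R) (b : σ → R) (A : σ → σ → R), ∀ x : σ → R,
        Q.coeff d * ∏ i, x i ^ d i = qf c b A x by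
      obtain ⟨c', b', A', h'⟩ := this
      refine ⟨c' + c, b' + b, A' + A, fun x => ?_⟩
      rw [sum_insert hd, h, h']
      simp only [qf, Pi.add_apply, add_mul, sum_add_distrib]
      ring
    generalize Q.coeff d = r
    by_cases h0 : d = 0
    · subst h0
      exact ⟨r, 0, 0, fun x => by simp [qf]⟩
    obtain ⟨i, d', rfl, e1⟩ := exists_single d h0
    by_cases h0' : d' = 0
    · subst h0'
      refine ⟨0, Pi.single i r, 0, fun x => ?_⟩
      rw [prod_single_pow]
      simp [qf, Pi.single_apply]
    obtain ⟨j, d'', rfl, e2⟩ := exists_single d' h0'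
    have h0'' : d'' = 0 := by
      by_contra hne
      obtain ⟨_, _, _, e3⟩ := exists_single d'' hne
      omega
    subst h0''
    refine ⟨0, 0, Pi.single i (Pi.single j r), fun x => ?_⟩
    rw [prod_single_pow, prod_single_pow]
    simp only [qf]
    have t1 : ∑ a, ∑ k, (Pi.single i (Pi.single j r) : σ → σ → R) a k * x a * x k =
        ∑ k, (Pi.single j r : σ → R) k * x i * x k := by
      rw [sum_eq_single i]
      · simp
      · intro k _ hk; simp [hk]
      · simp
    have t2 : ∑ k, (Pi.single j r : σ → R) k * x i * x k = r * x i * x j := by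
      rw [sum_eq_single j]
      · simp
      · intro k _ hk; simp [hk]
      · simp
    rw [t1, t2]
    simp
    ring

lemma card_bx_eq (r m : ℕ) (P : (Fin m → ZMod (2 ^ r)) → Prop) [DecidablePred P] :
    Nat.card {x : Fin m → ZMod (2 ^ r) // P x} =
      ∑ x ∈ bx (fun _ : Fin m => r), if P (fun i => (x i : ZMod (2 ^ r))) then 1 else 0 := by
  rw [Nat.card_eq_fintype_card, Fintype.card_subtype, card_filter]
  refine sum_bij' (fun x _ => fun i => (x i).val) (fun a _ => fun i => (a i : ZMod (2 ^ r))) ?_ ?_ ?_ ?_ ?_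
  · intro x _; simp only [bx, Fintype.mem_piFinset, mem_range]
    intro i; exact ZMod.val_lt (x i)
  · intros; simp
  · intro x _; funext i; simp
  · intro a ha
    simp only [bx, Fintype.mem_piFinset, mem_range] at ha
    funext i
    simp only [ZMod.val_natCast]
    exact Nat.mod_eq_of_lt (ha i)
  · intro x _; simp

/-- Corollary (a): restricting `z` to a coset: the sum `∑_{j<2^v} #k_{Q, z=l+g2^{r-v}j}`
is divisible by `2^{⌈(r(n-1)+min(2v,r))/2⌉-1}`. -/
theorem stmt_5 (r : ℕ) (hr : 1 ≤ r) (n : ℕ) (hn : 3 ≤ n)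
    (Q : MvPolynomial (Fin n) (ZMod (2 ^ r))) (hQ : Q.totalDegree ≤ 2)
    (v : ℕ) (hv : v ≤ r) (k g l : ZMod (2 ^ r)) :
    (2 ^ ((r * (n - 1) + min (2 * v) r + 1) / 2 - 1) : ℕ) ∣
    ∑ j : Fin (2 ^ v),
      Nat.card {x : Fin (n - 1) → ZMod (2 ^ r) //
        MvPolynomial.eval
          (fun t : Fin n => if h : (t : ℕ) < n - 1 then x ⟨t, h⟩
            else l + g * (2 : ZMod (2 ^ r)) ^ (r - v) * ((j : ℕ) : ZMod (2 ^ r))) Q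
          = k} := by
  classical
  obtain ⟨m, rfl⟩ : ∃ m, n = m + 1 := ⟨n - 1, by omega⟩
  obtain ⟨c, b, A, h⟩ := quad_rep Q hQ
  obtain ⟨c, rfl⟩ := ZMod.intCast_surjective c
  obtain ⟨k, rfl⟩ := ZMod.intCast_surjective k
  obtain ⟨g, rfl⟩ := ZMod.intCast_surjective g
  obtain ⟨l, rfl⟩ := ZMod.intCast_surjective l
  choose b' hb using fun i => ZMod.intCast_surjective (b i)
  choose A' hA using fun i j => ZMod.intCast_surjective (A i j)
  have key : ∀ (j : ℕ) (x : Fin m → ℕ), (qf (c : ZMod (2 ^ r)) b A (fun t : Fin (m + 1) => if h : (t : ℕ) < m then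
      ((x ⟨t, h⟩ : ℕ) : ZMod (2 ^ r)) else (l : ZMod (2 ^ r)) + g * (2 : ZMod (2 ^ r)) ^ (r - v) * ((j : ℕ) : ZMod (2 ^ r)))
      = (k : ZMod (2 ^ r)) ↔ (2 : ℤ) ^ r ∣ qz
        (c + b' (Fin.last m) * l + A' (Fin.last m) (Fin.last m) * l ^ 2 - k)
        (fun i => b' i.castSucc + l * (A' i.castSucc (Fin.last m) + A' (Fin.last m) i.castSucc))
        (fun i j => A' i.castSucc j.castSucc)
        (g * (b' (Fin.last m) + 2 * l * A' (Fin.last m) (Fin.last m)))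
        (fun i => g * (A' i.castSucc (Fin.last m) + A' (Fin.last m) i.castSucc))
        (g ^ 2 * A' (Fin.last m) (Fin.last m)) (cst x) (2 ^ (r - v) * j)) := by
    intro j x
    have e := ZMod.intCast_zmod_eq_zero_iff_dvd (qf c b' A' (fun t : Fin (m + 1) => if h : (t : ℕ) < m then
      (x ⟨t, h⟩ : ℤ) else l + g * 2 ^ (r - v) * j) - k) (2 ^ r)
    rw [Int.cast_sub, sub_eq_zero, qf_cast] at e
    simp only [hb, hA] at e
    push_cast at e
    have e3 : (fun t : Fin (m + 1) => ((if h : (t : ℕ) < m then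
      (x ⟨t, h⟩ : ℤ) else l + g * 2 ^ (r - v) * j : ℤ) : ZMod (2 ^ r))) = (fun t : Fin (m + 1) => if h : (t : ℕ) < m then
      ((x ⟨t, h⟩ : ℕ) : ZMod (2 ^ r)) else (l : ZMod (2 ^ r)) + g * (2 : ZMod (2 ^ r)) ^ (r - v) * ((j : ℕ) : ZMod (2 ^ r))) := by
      funext t
      split_ifs <;> push_cast <;> rfl
    rw [e3] at e
    rw [e]
    have e2 : ∀ a b : ℤ, a = b → ((2 : ℤ) ^ r ∣ a ↔ (2 : ℤ) ^ r ∣ b) := by rintro a b rfl; rfl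
    apply e2
    simp only [qz, qf, cst, Fin.sum_univ_castSucc, Fin.val_castSucc, Fin.is_lt, dite_true, Fin.val_last,
      lt_irrefl, dite_false, Fin.eta, sum_add_distrib]
    generalize hz : (2 : ℤ) ^ (r - v) * j = z
    have hz' : g * 2 ^ (r - v) * (j : ℤ) = g * z := by rw [← hz]; ring
    rw [hz']
    simp only [add_mul, mul_add, sum_add_distrib, ← mul_sum, ← sum_mul, mul_assoc]
    have f1 : ∀ t : ℤ, ∑ i : Fin m, A' i.castSucc (Fin.last m) * ((x i : ℤ) * t) =
        t * ∑ i : Fin m, A' i.castSucc (Fin.last m) * (x i : ℤ) := by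
      intro t; rw [mul_sum]; exact sum_congr rfl fun i _ => by ring
    have f2 : ∀ t : ℤ, ∑ i : Fin m, A' (Fin.last m) i.castSucc * (t * (x i : ℤ)) =
        t * ∑ i : Fin m, A' (Fin.last m) i.castSucc * (x i : ℤ) := by
      intro t; rw [mul_sum]; exact sum_congr rfl fun i _ => by ring
    simp only [f1, f2]
    have f3 : ∀ t t' : ℤ, ∑ i : Fin m, A' (Fin.last m) i.castSucc * (t * (t' * (x i : ℤ))) =
        t * t' * ∑ i : Fin m, A' (Fin.last m) i.castSucc * (x i : ℤ) := by
      intro t t'; rw [mul_sum]; exact sum_congr rfl fun i _ => by ring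
    have f4 : ∀ t t' : ℤ, ∑ i : Fin m, A' i.castSucc (Fin.last m) * ((x i : ℤ) * (t * t')) =
        t * t' * ∑ i : Fin m, A' i.castSucc (Fin.last m) * (x i : ℤ) := by
      intro t t'; rw [mul_sum]; exact sum_congr rfl fun i _ => by ring
    simp only [f3, f4]
    ring
  have H := thmS r (κ := Fin m) (by simp; omega) (fun _ : Fin m => r) v v (fun _ => le_rfl) hv le_rfl
    (c + b' (Fin.last m) * l + A' (Fin.last m) (Fin.last m) * l ^ 2 - k)
    (fun i => b' i.castSucc + l * (A' i.castSucc (Fin.last m) + A' (Fin.last m) i.castSucc))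
    (fun i j => A' i.castSucc j.castSucc)
    (g * (b' (Fin.last m) + 2 * l * A' (Fin.last m) (Fin.last m)))
    (fun i => g * (A' i.castSucc (Fin.last m) + A' (Fin.last m) i.castSucc))
    (g ^ 2 * A' (Fin.last m) (Fin.last m))
    ((r * (m + 1 - 1) + min (2 * v) r + 1) / 2 - 1) (by
      simp only [Fintype.card_fin, sum_const, card_univ, smul_eq_mul, Nat.add_sub_cancel]
      have h1 : 1 ≤ r * m := Nat.mul_pos hr (by omega)
      have h2 : m * r = r * m := mul_comm _ _
      omega)
  rw [Finset.sum_range] at H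
  convert H using 1
  refine sum_congr rfl fun j _ => (card_bx_eq r m _).trans (sum_congr rfl fun x _ => ?_)
  refine if_congr (Iff.trans ?_ (key j x)) rfl rfl
  rw [h]
  exact Iff.rfl
end

section
/- Let r ≥ 1 and let P(x) = a x^2 + b x + c be a polynomial over Z_{2^r}, where a = 2^m q and b = 2^m g for a natural number m < r and units q, g of Z_{2^r}. Then for every y ∈ Z_{2^r}: if y - c is divisible by 2^{m+1} in Z_{2^r}, the number of x ∈ Z_{2^r} with P(x) = y equals 2^{m+1}, and otherwise there is no x ∈ Z_{2^r} with P(x) = y. -/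
theorem aux_cases (r : ℕ) (x : ZMod (2 ^ r)) : ∃ t : ZMod (2 ^ r), x = 2 * t ∨ x = 2 * t + 1 := by
  obtain ⟨n, rfl⟩ := ZMod.natCast_zmod_surjective x
  rcases Nat.even_or_odd' n with ⟨k, h | h⟩
  · exact ⟨k, Or.inl (by rw [h]; push_cast; rfl)⟩
  · exact ⟨k, Or.inr (by rw [h]; push_cast; rfl)⟩

theorem aux_unit (r : ℕ) (s u : ZMod (2 ^ r)) (hu : IsUnit u) : IsUnit (2 * s + u) := by
  rw [add_comm]
  apply IsNilpotent.isUnit_add_left_of_commute _ hu (Commute.all _ _)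
  refine ⟨r, ?_⟩
  have h : ((2 ^ r : ℕ) : ZMod (2 ^ r)) = 0 := ZMod.natCast_self _
  push_cast at h
  rw [mul_pow, h, zero_mul]

theorem aux_surj (r : ℕ) (q u w : ZMod (2 ^ r)) (hu : IsUnit u) :
    ∃ t, 2 * q * t ^ 2 + u * t = w := by
  have hinj : Function.Injective (fun t : ZMod (2 ^ r) => 2 * q * t ^ 2 + u * t) := by
    intro t s h
    have h' : (2 * (q * (t + s)) + u) * (t - s) = 0 := by
      simp only at h
      linear_combination h
    have := (aux_unit r (q * (t + s)) u hu).mul_right_eq_zero.1 h'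
    exact sub_eq_zero.1 this
  exact (Finite.surjective_of_injective hinj) w

theorem aux_pow_ne (r m : ℕ) (hm : m < r) : (2 : ZMod (2 ^ r)) ^ m ≠ 0 := by
  intro h
  have h2 : ((2 ^ m : ℕ) : ZMod (2 ^ r)) = 0 := by push_cast; exact h
  rw [ZMod.natCast_eq_zero_iff] at h2
  have := (Nat.pow_dvd_pow_iff_le_right (by norm_num : 1 < 2)).1 h2
  omega

theorem aux_odd (r : ℕ) (q : (ZMod (2 ^ r))ˣ) (hr : 1 ≤ r) :
    ∃ t, (q : ZMod (2 ^ r)) = 2 * t + 1 := by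
  obtain ⟨t, h | h⟩ := aux_cases r q
  · exfalso
    have h1 : (2 : ZMod (2 ^ r)) ^ r = 0 := by
      have h : ((2 ^ r : ℕ) : ZMod (2 ^ r)) = 0 := ZMod.natCast_self _
      push_cast at h
      exact h
    have h2 : IsUnit ((2 : ZMod (2 ^ r)) * t) := h ▸ q.isUnit
    have h3 := (isUnit_of_mul_isUnit_left h2).pow r
    rw [h1, isUnit_zero_iff] at h3
    apply aux_pow_ne r 0 (by omega)
    rw [pow_zero, h3]
  · exact ⟨t, h⟩

theorem aux_ker (r m : ℕ) (hm : m < r) :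
    Nat.card {z : ZMod (2 ^ r) // (2 : ZMod (2 ^ r)) ^ m * z = 0} = 2 ^ m := by
  have h := IsAddCyclic.card_nsmulAddMonoidHom_ker (G := ZMod (2 ^ r)) (2 ^ m)
  rw [Nat.card_zmod, Nat.gcd_eq_right (pow_dvd_pow 2 hm.le)] at h
  rw [← h]
  refine Nat.card_congr (Equiv.subtypeEquivRight fun z => ?_)
  simp [AddMonoidHom.mem_ker, nsmul_eq_mul]

/-- The main count. -/
theorem aux_count (r m : ℕ) (hr : 1 ≤ r) (hm : m < r) (q g : (ZMod (2 ^ r))ˣ)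
    (c' : ZMod (2 ^ r)) :
    Nat.card {x : ZMod (2 ^ r) // (2 : ZMod (2 ^ r)) ^ m * (q * x ^ 2 + g * x - 2 * c') = 0}
      = 2 ^ (m + 1) := by
  have hd : 2 ∣ 2 ^ r := dvd_pow_self 2 (by omega)
  let π := ZMod.castHom hd (ZMod 2)
  have hπ2 : ∀ t, π (2 * t) = 0 := by
    intro t
    rw [map_mul, map_ofNat]
    have : (OfNat.ofNat 2 : ZMod 2) = 0 := by decide
    rw [this, zero_mul]
  obtain ⟨q', hq⟩ := aux_odd r q hr
  obtain ⟨g', hg⟩ := aux_odd r g hr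
  let F : {x : ZMod (2 ^ r) // (2 : ZMod (2 ^ r)) ^ m * (q * x ^ 2 + g * x - 2 * c') = 0} →
      {z : ZMod (2 ^ r) // (2 : ZMod (2 ^ r)) ^ m * z = 0} × ZMod 2 :=
    fun x => (⟨_, x.2⟩, π x.1)
  have hF : Function.Bijective F := by
    constructor
    · rintro ⟨x, hx⟩ ⟨y, hy⟩ h
      simp only [F, Prod.mk.injEq, Subtype.mk.injEq] at h ⊢
      obtain ⟨h1, h2⟩ := h
      have h3 : ∃ s, x + y = 2 * s := by
        obtain ⟨s, h | h⟩ := aux_cases r (x + y)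
        · exact ⟨s, h⟩
        · exfalso
          have := congrArg π h
          rw [map_add, map_add, hπ2, map_one, h2, CharTwo.add_self_eq_zero] at this
          revert this; decide
      obtain ⟨s, hs⟩ := h3
      have h' : (2 * (q * s) + g) * (x - y) = 0 := by
        linear_combination h1 - q * (x - y) * hs
      exact sub_eq_zero.1 ((aux_unit r _ _ g.isUnit).mul_right_eq_zero.1 h')
    · rintro ⟨⟨z, hz⟩, e⟩
      have h3 : ∃ s, z = 2 * s := by
        obtain ⟨s, h | h⟩ := aux_cases r z
        · exact ⟨s, h⟩
        · exfalso
          rw [h] at hz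
          exact aux_pow_ne r m hm ((aux_unit r s 1 isUnit_one).mul_left_eq_zero.1 hz)
      obtain ⟨s, rfl⟩ := h3
      have h4 : ∃ x : ZMod (2 ^ r), q * x ^ 2 + g * x - 2 * c' = 2 * s ∧ π x = e := by
        have he : e = 0 ∨ e = 1 := by revert e; decide
        rcases he with rfl | rfl
        · obtain ⟨t, ht⟩ := aux_surj r q g (s + c') g.isUnit
          exact ⟨2 * t, by linear_combination 2 * ht, hπ2 t⟩
        · obtain ⟨t, ht⟩ := aux_surj r q (2 * q + g) (s + c' - q' - g' - 1)
            (aux_unit r _ _ g.isUnit)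
          exact ⟨2 * t + 1, by linear_combination 2 * ht + hq + hg,
            by rw [map_add, hπ2, map_one, zero_add]⟩
      obtain ⟨x, hx1, hx2⟩ := h4
      refine ⟨⟨x, by rw [hx1]; exact hz⟩, ?_⟩
      simp only [F, hx2]
      congr 2
  rw [Nat.card_eq_of_bijective F hF, Nat.card_prod, aux_ker r m hm, Nat.card_zmod, pow_succ]

/-- For `P(x) = ax² + bx + c` over `ℤ/2^r` with `a = 2^m q`, `b = 2^m g`
(`q, g` units, `m < r`): if `2^{m+1} ∣ y - c` then `P(x) = y` has exactly `2^{m+1}`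
solutions, otherwise none. -/
theorem stmt_15 (r m : ℕ) (hr : 1 ≤ r) (hm : m < r)
    (a b c : ZMod (2 ^ r)) (q g : (ZMod (2 ^ r))ˣ)
    (ha : a = (2 : ZMod (2 ^ r)) ^ m * (q : ZMod (2 ^ r)))
    (hb : b = (2 : ZMod (2 ^ r)) ^ m * (g : ZMod (2 ^ r)))
    (y : ZMod (2 ^ r)) :
    ((∃ c' : ZMod (2 ^ r), y - c = (2 : ZMod (2 ^ r)) ^ (m + 1) * c') →
      Nat.card {x : ZMod (2 ^ r) // a * x ^ 2 + b * x + c = y} = 2 ^ (m + 1)) ∧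
    ((¬ ∃ c' : ZMod (2 ^ r), y - c = (2 : ZMod (2 ^ r)) ^ (m + 1) * c') →
      Nat.card {x : ZMod (2 ^ r) // a * x ^ 2 + b * x + c = y} = 0) := by
  subst ha hb
  constructor
  · rintro ⟨c', h⟩
    rw [← aux_count r m hr hm q g c']
    refine Nat.card_congr (Equiv.subtypeEquivRight fun x => ?_)
    constructor
    · intro hx
      linear_combination hx + h
    · intro hx
      linear_combination hx - h
  · intro h
    rw [Nat.card_eq_zero]
    left
    refine ⟨fun ⟨x, hx⟩ => h ?_⟩
    obtain ⟨q', hq⟩ := aux_odd r q hr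
    obtain ⟨g', hg⟩ := aux_odd r g hr
    obtain ⟨t, rfl | rfl⟩ := aux_cases r x
    · exact ⟨2 * q * t ^ 2 + g * t, by rw [← hx]; ring⟩
    · exact ⟨2 * q * t ^ 2 + (2 * q + g) * t + q' + g' + 1, by
        rw [← hx]; linear_combination 2 ^ m * hq + 2 ^ m * hg⟩
end
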